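/- Let D be an integral domain and ⋆ a semistar operation on D. Then D is ⋆-Noetherian if and only if D is ⋆_f-Noetherian. -/

import Mathlib

open scoped Pointwise

section SemistarDefs

variable {D : Type*} [CommRing D] [IsDomain D]
variable {K : Type*} [Field K] [Algebra D K] [IsFractionRing D K]

/-- `star` is a semistar operation on the integral domain `D` with quotient field `K`:
a map on (nonzero) `D`-submodules of `K` satisfying `(xE)^⋆ = x·E^⋆`, monotonicity,
extensivity and idempotence. -/
structure IsSemistarOperation (star : Submodule D K → Submodule D K) : Prop where
  ne_bot : ∀ {E : Submodule D K}, E ≠ ⊥ → star E ≠ ⊥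
  map_smul : ∀ (x : K), x ≠ 0 → ∀ {E : Submodule D K}, E ≠ ⊥ →
    star (Submodule.map (LinearMap.mulLeft D x) E) = Submodule.map (LinearMap.mulLeft D x) (star E)
  mono : ∀ {E F : Submodule D K}, E ≠ ⊥ → F ≠ ⊥ → E ≤ F → star E ≤ star F
  le_star : ∀ {E : Submodule D K}, E ≠ ⊥ → E ≤ star E
  star_star : ∀ {E : Submodule D K}, E ≠ ⊥ → star (star E) = star E

/-- The image in `K` of an ideal `I` of `D`, as a `D`-submodule of `K`. -/
def idealExt (K : Type*) [Field K] [Algebra D K] (I : Ideal D) : Submodule D K :=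
  Submodule.map (Algebra.linearMap D K) I

/-- `I` is a quasi-⋆-ideal: a nonzero ideal of `D` with `I = I^⋆ ∩ D`. -/
def QuasiStarIdeal (star : Submodule D K → Submodule D K) (I : Ideal D) : Prop :=
  I ≠ ⊥ ∧ Submodule.comap (Algebra.linearMap D K) (star (idealExt K I)) = I

/-- `P` is a quasi-⋆-prime: a prime ideal which is a quasi-⋆-ideal. -/
def QuasiStarPrime (star : Submodule D K → Submodule D K) (P : Ideal D) : Prop :=
  P.IsPrime ∧ QuasiStarIdeal star P

/-- `M` is a quasi-⋆-maximal ideal: maximal in the set of proper quasi-⋆-ideals of `D`. -/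
def QuasiStarMaximal (star : Submodule D K → Submodule D K) (M : Ideal D) : Prop :=
  QuasiStarIdeal star M ∧ M ≠ ⊤ ∧
    ∀ J : Ideal D, QuasiStarIdeal star J → J ≠ ⊤ → M ≤ J → J = M

/-- The finite-type semistar operation `⋆_f` associated to `⋆`:
`E^{⋆_f} = ⋃ { F^⋆ : F nonzero finitely generated, F ⊆ E }`. -/
def finTypeOp (star : Submodule D K → Submodule D K) : Submodule D K → Submodule D K :=
  fun E => ⨆ (F : Submodule D K) (_ : F ≠ ⊥) (_ : F.FG) (_ : F ≤ E), star F

/-- The extension `E·D_Q` of a `D`-submodule `E` of `K` to the localization of `D` at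
(the complement of) `Q`, described as `{ x ∈ K : s·x ∈ E for some s ∉ Q }`. -/
def extendToPrime (Q : Ideal D) (E : Submodule D K) : Submodule D K :=
  Submodule.span D {x : K | ∃ s : D, s ∉ Q ∧ algebraMap D K s * x ∈ E}

/-- The stable semistar operation of finite type `⋆̃` associated to `⋆`:
`E^⋆̃ = ⋂ { E·D_Q : Q a quasi-⋆_f-maximal ideal of D }`. -/
def stableOp (star : Submodule D K → Submodule D K) : Submodule D K → Submodule D K :=
  fun E => ⨅ (Q : Ideal D) (_ : QuasiStarMaximal (finTypeOp star) Q), extendToPrime Q E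

/-- A rank-one discrete valuation ring: a (domain which is a) local PID which is not a field. -/
def IsDVR (R : Type*) [CommRing R] : Prop :=
  ∃ h : IsDomain R, @IsDiscreteValuationRing R _ h

/-- A valuation domain. -/
def IsValuationDomain (R : Type*) [CommRing R] : Prop :=
  ∃ h : IsDomain R, @ValuationRing R _ h

/-- `D` is a ⋆-almost Dedekind domain: `D_M` is a rank-one discrete valuation ring for
every quasi-⋆_f-maximal ideal `M` of `D`. -/
def StarADD (star : Submodule D K → Submodule D K) : Prop :=
  ∀ (M : Ideal D) [M.IsPrime], QuasiStarMaximal (finTypeOp star) M →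
    IsDVR (Localization.AtPrime M)

/-- `D` is a Prüfer ⋆-multiplication domain: `D_M` is a valuation domain for every
quasi-⋆_f-maximal ideal `M` of `D`. -/
def StarPMD (star : Submodule D K → Submodule D K) : Prop :=
  ∀ (M : Ideal D) [M.IsPrime], QuasiStarMaximal (finTypeOp star) M →
    IsValuationDomain (Localization.AtPrime M)

/-- `D` is ⋆-Noetherian: ascending chain condition on quasi-⋆-ideals. -/
def StarNoetherian (star : Submodule D K → Submodule D K) : Prop :=
  ∀ c : ℕ →o Ideal D, (∀ n, QuasiStarIdeal star (c n)) → ∃ n, ∀ m, n ≤ m → c m = c n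

/-- `D` is a ⋆-Dedekind domain: ⋆-Noetherian and a P⋆MD. -/
def StarDedekind (star : Submodule D K → Submodule D K) : Prop :=
  StarNoetherian star ∧ StarPMD star

/-- `D` has the ⋆_f-finite character property: every nonzero element of `D` lies in only
finitely many quasi-⋆_f-maximal ideals. -/
def StarFiniteCharacter (star : Submodule D K → Submodule D K) : Prop :=
  ∀ d : D, d ≠ 0 → {M : Ideal D | QuasiStarMaximal (finTypeOp star) M ∧ d ∈ M}.Finite

/-- The `v`-operation `E ↦ (D : (D : E))`. -/
def vOp : Submodule D K → Submodule D K := fun E => 1 / (1 / E)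

/-- A nonzero `D`-submodule `E` of `K` is quasi-∗-invertible if `(E·(D^∗ : E))^∗ = D^∗`. -/
def QuasiStarInvertible (star : Submodule D K → Submodule D K) (E : Submodule D K) : Prop :=
  star (E * (star 1 / E)) = star (1 : Submodule D K)

/-- `D` has the ∗-cancellation law: for nonzero fractional ideals `A`, `B`, `C`,
`(AB)^∗ = (AC)^∗` implies `B^∗ = C^∗`. -/
def StarCancellation (star : Submodule D K → Submodule D K) : Prop :=
  ∀ A B C : Submodule D K, A ≠ ⊥ → B ≠ ⊥ → C ≠ ⊥ →
    IsFractional (nonZeroDivisors D) A → IsFractional (nonZeroDivisors D) B →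
    IsFractional (nonZeroDivisors D) C →
    star (A * B) = star (A * C) → star B = star C

/-- The ∗-dimension of `D`: the supremum of the lengths of chains of quasi-∗-prime ideals
of `D` (between `(0)` and a quasi-∗-prime). -/
noncomputable def starDim (star : Submodule D K → Submodule D K) : ℕ∞ :=
  ⨆ (k : ℕ) (_ : ∃ c : Fin k → Ideal D, StrictMono c ∧ ∀ i, QuasiStarPrime star (c i)),
    (k : ℕ∞)

/-- A submodule `T` of `K` (containing the image of an integral domain with quotient
field `K`) is integrally closed (in `K`) if every `x ∈ K` satisfying a monic polynomial
equation with coefficients in `T` belongs to `T`. -/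
def IntegrallyClosedSub (T : Submodule D K) : Prop :=
  ∀ x : K, (∃ (n : ℕ) (c : Fin n → K), (∀ i, c i ∈ T) ∧
    x ^ n = ∑ i : Fin n, c i * x ^ (i : ℕ)) → x ∈ T

/-- The content ideal `c(p)` of a polynomial: the ideal generated by its coefficients. -/
def contentIdeal (p : Polynomial D) : Ideal D := Ideal.span (Set.range p.coeff)

/-- The multiplicative set `N(⋆) = { h ∈ D[X] : h ≠ 0, c(h)^⋆ = D^⋆ }` (as a submonoid,
via the closure of this multiplicatively closed set). -/
noncomputable def nagataMonoid (star : Submodule D K → Submodule D K) : Submonoid (Polynomial D) :=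
  Submonoid.closure
    {p : Polynomial D | p ≠ 0 ∧ star (idealExt K (contentIdeal p)) = star (1 : Submodule D K)}

/-- The Nagata ring `Na(D,⋆) = D[X]_{N(⋆)}`. -/
abbrev NagataRing (star : Submodule D K → Submodule D K) :=
  Localization (nagataMonoid star)

/-- `V` is a valuation overring of `D` (inside the quotient field `K`): `D ⊆ V ⊆ K` and
for every nonzero `x ∈ K`, `x ∈ V` or `x⁻¹ ∈ V`. -/
def IsValuationOverring (D : Type*) [CommRing D] {K : Type*} [Field K] [Algebra D K]
    (V : Subring K) : Prop :=
  (∀ d : D, algebraMap D K d ∈ V) ∧ ∀ x : K, x ≠ 0 → (x ∈ V ∨ x⁻¹ ∈ V)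

/-- `V` is a ∗-valuation overring of `D`: a valuation overring such that `F^∗ ⊆ FV` for
every nonzero finitely generated `D`-submodule `F` of `K`. -/
def IsStarValuationOverring (star : Submodule D K → Submodule D K) (V : Subring K) : Prop :=
  IsValuationOverring D V ∧
    ∀ F : Submodule D K, F ≠ ⊥ → F.FG →
      star F ≤ Submodule.span D ((F : Set K) * (V : Set K))

/-- `D` is a Krull domain: there is a family of rank-one discrete valuation overrings of `D`
with quotient field `K` whose intersection is `D`, with finite character. -/
def IsKrullDomain (D : Type*) [CommRing D] (K : Type*) [Field K] [Algebra D K] : Prop :=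
  ∃ 𝒱 : Set (Subring K),
    (∀ V ∈ 𝒱, (∀ d : D, algebraMap D K d ∈ V) ∧ IsDVR V ∧
      ∀ x : K, ∃ a ∈ V, ∃ b ∈ V, b ≠ 0 ∧ x * b = a) ∧
    (⋂ V ∈ 𝒱, (V : Set K)) = Set.range (algebraMap D K) ∧
    ∀ d : D, d ≠ 0 → {V ∈ 𝒱 | ¬ ∃ y ∈ V, algebraMap D K d * y = 1}.Finite

end SemistarDefs

section Statement

variable {D : Type*} [CommRing D] [IsDomain D]
variable {K : Type*} [Field K] [Algebra D K] [IsFractionRing D K]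

theorem idealExt_ne_bot' {I : Ideal D} (h : I ≠ ⊥) : idealExt K I ≠ ⊥ := by
  intro h0
  apply h
  rw [eq_bot_iff]
  intro x hx
  have h1 : algebraMap D K x ∈ idealExt K I := ⟨x, hx, rfl⟩
  rw [h0, Submodule.mem_bot] at h1
  exact (IsFractionRing.injective D K) (by simpa using h1)

theorem finTypeOp_le' {star : Submodule D K → Submodule D K} (hstar : IsSemistarOperation star)
    {E : Submodule D K} (hE : E ≠ ⊥) : finTypeOp star E ≤ star E :=
  iSup_le fun _ => iSup_le fun h0 => iSup_le fun _ => iSup_le fun h => hstar.mono h0 hE h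

theorem le_finTypeOp' (star : Submodule D K → Submodule D K)
    {E F : Submodule D K} (h0 : F ≠ ⊥) (hfg : F.FG) (h : F ≤ E) : star F ≤ finTypeOp star E :=
  le_iSup_of_le F (le_iSup_of_le h0 (le_iSup_of_le hfg (le_iSup_of_le h le_rfl)))

theorem self_le_finTypeOp' {star : Submodule D K → Submodule D K}
    (hstar : IsSemistarOperation star) (E : Submodule D K) : E ≤ finTypeOp star E := by
  intro x hx
  by_cases h : x = 0
  · rw [h]; exact zero_mem _
  have h0 : Submodule.span D {x} ≠ ⊥ := by simpa using h
  exact le_finTypeOp' star h0 (Submodule.fg_span_singleton x)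
    ((Submodule.span_singleton_le_iff_mem _ _).2 hx)
    (hstar.le_star h0 (Submodule.mem_span_singleton_self x))

theorem le_cl' {star : Submodule D K → Submodule D K}
    (hstar : IsSemistarOperation star) {J : Ideal D} (hJ : J ≠ ⊥) :
    J ≤ Submodule.comap (Algebra.linearMap D K) (star (idealExt K J)) := fun x hx =>
  hstar.le_star (idealExt_ne_bot' hJ) (Submodule.mem_map_of_mem hx)

theorem quasi_cl' {star : Submodule D K → Submodule D K}
    (hstar : IsSemistarOperation star) {J : Ideal D} (hJ : J ≠ ⊥) :
    QuasiStarIdeal star (Submodule.comap (Algebra.linearMap D K) (star (idealExt K J))) := by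
  have hle := le_cl' hstar hJ
  have hb := ne_bot_of_le_ne_bot hJ hle
  refine ⟨hb, le_antisymm ?_ (le_cl' hstar hb)⟩
  apply Submodule.comap_mono
  have h1 := hstar.star_star (idealExt_ne_bot' (K := K) hJ)
  conv_rhs => rw [← h1]
  exact hstar.mono (idealExt_ne_bot' hb) (hstar.ne_bot (idealExt_ne_bot' hJ))
    (Submodule.map_comap_le _ _)

theorem exists_fg' {star : Submodule D K → Submodule D K}
    (hstar : IsSemistarOperation star) (hN : StarNoetherian star) {I : Ideal D} (hI : I ≠ ⊥) :
    ∃ J : Ideal D, J ≠ ⊥ ∧ J.FG ∧ J ≤ I ∧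
      I ≤ Submodule.comap (Algebra.linearMap D K) (star (idealExt K J)) := by
  have wf : WellFoundedGT {I : Ideal D // QuasiStarIdeal star I} := by
    rw [wellFoundedGT_iff_monotone_chain_condition]
    intro a
    obtain ⟨n, hn⟩ := hN ⟨fun n => (a n).1, fun i j h => a.monotone h⟩ (fun n => (a n).2)
    exact ⟨n, fun m hm => Subtype.ext (hn m hm).symm⟩
  let S : Set {I : Ideal D // QuasiStarIdeal star I} :=
    {A | ∃ J : Ideal D, J ≠ ⊥ ∧ J.FG ∧ J ≤ I ∧
      A.1 = Submodule.comap (Algebra.linearMap D K) (star (idealExt K J))}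
  have hS : S.Nonempty := by
    obtain ⟨x, hx, hx0⟩ := Submodule.exists_mem_ne_zero_of_ne_bot hI
    have h0 : Ideal.span {x} ≠ ⊥ := by simpa using hx0
    exact ⟨⟨_, quasi_cl' hstar h0⟩, Ideal.span {x}, h0, Submodule.fg_span_singleton x,
      (Submodule.span_singleton_le_iff_mem _ _).2 hx, rfl⟩
  obtain ⟨A, ⟨J, hJ0, hJfg, hJI, hA⟩, hmax⟩ := wf.wf.has_min S hS
  refine ⟨J, hJ0, hJfg, hJI, fun x hx => ?_⟩
  have h0 : J ⊔ Ideal.span {x} ≠ ⊥ := ne_bot_of_le_ne_bot hJ0 le_sup_left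
  have hB := hmax ⟨_, quasi_cl' hstar h0⟩ ⟨J ⊔ Ideal.span {x}, h0,
    Submodule.FG.sup hJfg (Submodule.fg_span_singleton x),
    sup_le hJI ((Submodule.span_singleton_le_iff_mem _ _).2 hx), rfl⟩
  have hle : A.1 ≤ Submodule.comap (Algebra.linearMap D K)
      (star (idealExt K (J ⊔ Ideal.span {x}))) := by
    rw [hA]
    exact Submodule.comap_mono (hstar.mono (idealExt_ne_bot' hJ0) (idealExt_ne_bot' h0)
      (Submodule.map_mono le_sup_left))
  rw [← hA]
  by_contra hxA
  apply hB
  refine lt_of_le_of_ne hle fun h => hxA ?_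
  rw [h]
  exact le_cl' hstar h0 (le_sup_right (a := J) (Ideal.mem_span_singleton_self x))

/-- `D` an integral domain, `⋆` a semistar operation on `D`. Then `D` is
⋆-Noetherian iff `D` is ⋆_f-Noetherian. -/
theorem starNoetherian_iff_finType_starNoetherian
    (star : Submodule D K → Submodule D K) (hstar : IsSemistarOperation star) :
    StarNoetherian star ↔ StarNoetherian (finTypeOp star) := by
  constructor
  · intro hN c hc
    refine hN c fun n => ⟨(hc n).1, ?_⟩
    obtain ⟨J, hJ0, hJfg, hJI, hle⟩ := exists_fg' hstar hN (hc n).1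
    refine le_antisymm ?_ (le_cl' hstar (hc n).1)
    conv_rhs => rw [← (hc n).2]
    apply Submodule.comap_mono
    refine le_trans ?_ (le_finTypeOp' star (idealExt_ne_bot' hJ0) (Submodule.FG.map _ hJfg)
      (Submodule.map_mono hJI))
    change _ ≤ star (idealExt K J)
    rw [← hstar.star_star (idealExt_ne_bot' hJ0)]
    exact hstar.mono (idealExt_ne_bot' (hc n).1) (hstar.ne_bot (idealExt_ne_bot' hJ0))
      (Submodule.map_le_iff_le_comap.2 hle)
  · intro hN c hc
    refine hN c fun n => ⟨(hc n).1, le_antisymm ?_ ?_⟩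
    · conv_rhs => rw [← (hc n).2]
      exact Submodule.comap_mono (finTypeOp_le' hstar (idealExt_ne_bot' (hc n).1))
    · exact fun x hx => self_le_finTypeOp' hstar _ (Submodule.mem_map_of_mem hx)

end Statement
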